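/- arXiv:2001.09970 — 6 statements merged into one kernel-verified Lean document; each statement's English description precedes it below -/
import Mathlib

section
/- Under these hypotheses, every conjugacy class of G consisting of nonidentity p-regular elements has defect zero; that is, for every p-regular element g ≠ 1 of G, the order of the centralizer C_G(g) is not divisible by p. -/
/-!
Suppose `g ≠ 1` is `p`-regular and commutes with an element `u` of order `p`. Since `D` is a normal
Sylow `p`-subgroup, `u ∈ D`, whereas `u * g` is a `p`-singular element outside `D`. Its class is one
of only two `p`-singular classes, so all nonidentity elements of `D` are conjugate to each other and
`D`, having a nontrivial center, is abelian. Now `D` is a normal `p`-subgroup of the `p`-nilpotent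
group `C_G(u)` and `g` lies in the normal `p`-complement of that group, so `g` centralizes `D`.
But `D` is self-centralizing because `E` acts faithfully, which forces `g ∈ D`, a contradiction.
-/

/-- A group is `p`-nilpotent if it has a normal `p`-complement. For `p` prime this
includes finiteness of `G`, because infinite cardinalities and indices are `0` here. -/
def IsPNilpotent (p : ℕ) (G : Type*) [Group G] : Prop :=
  ∃ N : Subgroup G, N.Normal ∧ Nat.Coprime (Nat.card N) p ∧ ∃ n : ℕ, N.index = p ^ n

/-- The conjugacy classes of `p`-regular elements; their number is `ℓ_p(G)`, and the complement
consists of the `p`-singular classes. -/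
def pRegularClasses (p : ℕ) (G : Type*) [Group G] : Set (ConjClasses G) :=
  {c | ∀ g ∈ c.carrier, ¬ p ∣ orderOf g}

section

variable {p : ℕ} {G : Type*} [Group G]

theorem mem_of_coprime_orderOf_index {H : Subgroup G} [H.Normal] {x : G}
    (hx : (orderOf x).Coprime H.index) : x ∈ H := by
  rw [← QuotientGroup.eq_one_iff, ← orderOf_eq_one_iff]
  exact Nat.eq_one_of_dvd_coprimes hx (orderOf_map_dvd (QuotientGroup.mk' H) x)
    (orderOf_dvd_natCard _)

theorem dvd_orderOf_of_mem_isPGroup [Fact p.Prime] {D : Subgroup G} (hD : IsPGroup p D) {x : G}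
    (hx : x ∈ D) (hx1 : x ≠ 1) : p ∣ orderOf x := by
  simpa using hD.dvd_orderOf (g := ⟨x, hx⟩) (by simpa using hx1)

theorem IsPNilpotent.mem_centralizer (hG : IsPNilpotent p G) {D : Subgroup G} [D.Normal]
    (hD : IsPGroup p D) {g : G} (hg : (orderOf g).Coprime p) :
    g ∈ Subgroup.centralizer (D : Set G) := by
  obtain ⟨N, hN, hNp, n, hNindex⟩ := hG
  have hgN : g ∈ N := mem_of_coprime_orderOf_index (hNindex ▸ hg.pow_right n)
  have hDN : Disjoint D N := IsPGroup.disjoint_of_coprime hD IsPGroup.card hNp.symm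
  exact fun d hd ↦ Subgroup.commute_of_normal_of_disjoint D N inferInstance hN hDN d g hd hgN

theorem mem_centralizer_of_isPNilpotent_centralizer {D : Subgroup G} [D.Normal]
    [IsMulCommutative D] (hD : IsPGroup p D) {u g : G} (hu : u ∈ D)
    (hnilp : IsPNilpotent p (Subgroup.centralizer ({u} : Set G))) (hug : Commute u g)
    (hg : (orderOf g).Coprime p) : g ∈ Subgroup.centralizer (D : Set G) := by
  have hDC : D ≤ Subgroup.centralizer {u} :=
    D.le_centralizer.trans (Subgroup.centralizer_le (Set.singleton_subset_iff.2 hu))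
  have hgC : g ∈ Subgroup.centralizer {u} := Subgroup.mem_centralizer_singleton_iff.2 hug.symm
  have hg' := hnilp.mem_centralizer (g := ⟨g, hgC⟩)
    (hD.comap_subtype : IsPGroup p (D.subgroupOf (Subgroup.centralizer {u})))
    (by rwa [Subgroup.orderOf_mk])
  exact fun d hd ↦ congrArg Subtype.val (hg' ⟨d, hDC hd⟩ hd)

theorem isConj_of_encard_compl_pRegularClasses_le_two [Fact p.Prime]
    (hcard : (pRegularClasses p G)ᶜ.encard ≤ 2) {D : Subgroup G} [D.Normal] (hD : IsPGroup p D)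
    {z : G} (hzD : z ∉ D) (hz : p ∣ orderOf z) {x y : G} (hx : x ∈ D) (hx1 : x ≠ 1)
    (hy : y ∈ D) (hy1 : y ≠ 1) : IsConj x y := by
  have singular_class {a : G} (ha : p ∣ orderOf a) :
      ConjClasses.mk a ∈ (pRegularClasses p G)ᶜ :=
    fun h ↦ h a ConjClasses.mem_carrier_mk ha
  have mk_ne_mk_z {a : G} (ha : a ∈ D) : ConjClasses.mk a ≠ ConjClasses.mk z := by
    rw [Ne, ConjClasses.mk_eq_mk_iff_isConj, isConj_iff]
    rintro ⟨c, rfl⟩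
    exact hzD (Subgroup.Normal.conj_mem inferInstance a ha c)
  by_contra hxy
  have hthree : ({.mk x, .mk y, .mk z} : Set (ConjClasses G)).encard = 3 :=
    Set.encard_eq_three.2 ⟨_, _, _, mt ConjClasses.mk_eq_mk_iff_isConj.1 hxy,
      mk_ne_mk_z hx, mk_ne_mk_z hy, rfl⟩
  have hsub : ({.mk x, .mk y, .mk z} : Set (ConjClasses G)) ⊆ (pRegularClasses p G)ᶜ := by
    rintro _ (rfl | rfl | rfl)
    exacts [singular_class (dvd_orderOf_of_mem_isPGroup hD hx hx1),
      singular_class (dvd_orderOf_of_mem_isPGroup hD hy hy1), singular_class hz]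
  exact absurd (hthree ▸ (Set.encard_le_encard hsub).trans hcard) (by decide)

theorem isMulCommutative_of_forall_isConj {D : Subgroup G} [D.Normal]
    [Nontrivial (Subgroup.center D)]
    (hD : ∀ x ∈ D, x ≠ 1 → ∀ y ∈ D, y ≠ 1 → IsConj x y) : IsMulCommutative D := by
  obtain ⟨z, hz, hz1⟩ := (Subgroup.center D).exists_ne_one_of_nontrivial
  have hnormal : ((Subgroup.center D).map D.subtype).Normal := inferInstance
  rw [← Subgroup.center_eq_top_iff, eq_top_iff]
  intro x _
  rcases eq_or_ne x 1 with rfl | hx1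
  · exact one_mem _
  obtain ⟨c, hc⟩ := isConj_iff.1 (hD z z.2 (by simpa using hz1) x x.2 (by simpa using hx1))
  have hx : (x : G) ∈ (Subgroup.center D).map D.subtype :=
    hc ▸ hnormal.conj_mem _ (Subgroup.mem_map_of_mem _ hz) c
  simpa using hx

theorem isMulCommutative_of_encard_compl_pRegularClasses_le_two [Fact p.Prime]
    (hcard : (pRegularClasses p G)ᶜ.encard ≤ 2) {D : Subgroup G} [D.Normal] [Finite D]
    (hD : IsPGroup p D) {u g : G} (hu : u ∈ D) (hu1 : u ≠ 1) (hgD : g ∉ D)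
    (hg : (orderOf g).Coprime p) (hug : Commute u g) : IsMulCommutative D := by
  have hugD : u * g ∉ D := mt (D.mul_mem_cancel_left hu).1 hgD
  have hugp : p ∣ orderOf (u * g) := by
    have hcop : (orderOf u).Coprime (orderOf g) := by
      simpa using hD.orderOf_coprime hg.symm ⟨u, hu⟩
    have hup : p ∣ orderOf u := dvd_orderOf_of_mem_isPGroup hD hu hu1
    exact hug.orderOf_mul_eq_mul_orderOf_of_coprime hcop ▸ hup.mul_right _
  have : Nontrivial D := D.nontrivial_iff_exists_ne_one.2 ⟨u, hu, hu1⟩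
  have := hD.center_nontrivial
  exact isMulCommutative_of_forall_isConj fun x hx hx1 y hy hy1 ↦
    isConj_of_encard_compl_pRegularClasses_le_two hcard hD hugD hugp hx hx1 hy hy1

theorem centralizer_le_of_sup_eq_top {D E : Subgroup G} [D.Normal] [IsMulCommutative D]
    (hDE : D ⊔ E = ⊤) (hfaith : Disjoint (Subgroup.centralizer (D : Set G)) E) :
    Subgroup.centralizer (D : Set G) ≤ D := by
  intro g hg
  obtain ⟨d, hd, e, he, rfl⟩ := Subgroup.mem_sup_of_normal_left.1 (hDE ▸ Subgroup.mem_top g)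
  have heC : e ∈ Subgroup.centralizer (D : Set G) :=
    ((Subgroup.centralizer (D : Set G)).mul_mem_cancel_left (D.le_centralizer hd)).1 hg
  rwa [Subgroup.disjoint_def.1 hfaith heC he, mul_one]

end

/-- Hypotheses: `G` is a finite group with normal Sylow `p`-subgroup `D`, `E` is a
`p'`-complement acting faithfully on `D`, `k(G) - ℓ_p(G) = 2`, and the centralizer of
every element of `D` of order `p` is `p`-nilpotent. -/
theorem stmt_0 {p : ℕ} (hp : p.Prime) {G : Type*} [Group G] [Fintype G]
    (D E : Subgroup G)
    (hDn : D.Normal)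
    (hDpgrp : IsPGroup p D)
    (hDsyl : ¬ p ∣ D.index)
    (hEp' : Nat.Coprime (Nat.card E) p)
    (hDEinf : D ⊓ E = ⊥)
    (hDEsup : D ⊔ E = ⊤)
    (hfaith : ∀ y ∈ E, (∀ d ∈ D, y * d = d * y) → y = 1)
    (hkl : Nat.card (ConjClasses G) =
      Nat.card {c : ConjClasses G // ∀ g ∈ c.carrier, ¬ p ∣ orderOf g} + 2)
    (hnilp : ∀ u : G, u ∈ D → orderOf u = p →
      ∃ N : Subgroup (Subgroup.centralizer ({u} : Set G)), N.Normal ∧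
        Nat.Coprime (Nat.card N) p ∧ ∃ n : ℕ, N.index = p ^ n) :
    ∀ g : G, g ≠ 1 → ¬ p ∣ orderOf g → ¬ p ∣ Nat.card (Subgroup.centralizer ({g} : Set G)) := by
  intro g hg1 hgp hdvd
  have : Fact p.Prime := ⟨hp⟩
  have hg : (orderOf g).Coprime p := (hp.coprime_iff_not_dvd.2 hgp).symm
  have hsingular : (pRegularClasses p G)ᶜ.encard ≤ 2 := by
    rw [← Set.Finite.cast_ncard_eq (Set.toFinite _),
      Set.ncard_compl_of_ncard_eq_add (pRegularClasses p G) (hkl.trans (add_comm _ 2)),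
      Nat.cast_ofNat]
  have hgD : g ∉ D := fun h ↦ hgp (dvd_orderOf_of_mem_isPGroup hDpgrp h hg1)
  obtain ⟨⟨u, hugC⟩, hu⟩ := exists_prime_orderOf_dvd_card' p hdvd
  rw [Subgroup.orderOf_mk] at hu
  have hug : Commute u g := Subgroup.mem_centralizer_singleton_iff.1 hugC
  have huD : u ∈ D := mem_of_coprime_orderOf_index (hu ▸ hp.coprime_iff_not_dvd.2 hDsyl)
  have hu1 : u ≠ 1 := fun h ↦ hp.one_lt.ne (by rw [← hu, h, orderOf_one])
  have : IsMulCommutative D :=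
    isMulCommutative_of_encard_compl_pRegularClasses_le_two hsingular hDpgrp huD hu1 hgD hg hug
  have hgC : g ∈ Subgroup.centralizer (D : Set G) :=
    mem_centralizer_of_isPNilpotent_centralizer hDpgrp huD (hnilp u huD hu) hug hg
  have hdisjoint : Disjoint (Subgroup.centralizer (D : Set G)) E :=
    Subgroup.disjoint_def.2 fun hyC hyE ↦ hfaith _ hyE fun d hd ↦ (hyC d hd).symm
  exact hgD (centralizer_le_of_sup_eq_top hDEsup hdisjoint hgC)
end

section
/- Under these hypotheses, the centralizer in G of every nonidentity element of D is contained in D; that is, for every u ∈ D with u ≠ 1 one has C_G(u) = C_D(u) ≤ D. -/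
theorem eq_of_card_le_card_subtype_add_two {α : Type*} [Finite α] {P : α → Prop}
    (hcard : Nat.card α ≤ Nat.card {a // P a} + 2) {a b c : α} (ha : ¬ P a) (hb : ¬ P b)
    (hc : ¬ P c) (hab : a ≠ b) (hcb : c ≠ b) : c = a := by
  have hcompl : {x | P x}.ncard + {x | P x}ᶜ.ncard = Nat.card α := Set.ncard_add_ncard_compl _
  have hle : {x | P x}ᶜ.ncard ≤ 2 := by
    change Nat.card α ≤ {x | P x}.ncard + 2 at hcard
    omega
  by_contra hca
  exact hle.not_gt <| (Set.two_lt_ncard_iff).2 ⟨a, b, c, ha, hb, hc, hab, Ne.symm hca, hcb.symm⟩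

section

variable {p : ℕ} {G : Type*} [Group G]

theorem isConj_of_card_conjClasses_le [Finite G]
    (hcard : Nat.card (ConjClasses G) ≤
      Nat.card {c : ConjClasses G // ∀ g ∈ c.carrier, ¬ p ∣ orderOf g} + 2)
    {a b c : G} (ha : p ∣ orderOf a) (hb : p ∣ orderOf b) (hc : p ∣ orderOf c)
    (hab : ¬ IsConj a b) (hcb : ¬ IsConj c b) : IsConj c a := by
  have singular {g : G} (hg : p ∣ orderOf g) :
      ¬ ∀ h ∈ (ConjClasses.mk g).carrier, ¬ p ∣ orderOf h :=
    fun h ↦ h g ConjClasses.mem_carrier_mk hg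
  rw [← ConjClasses.mk_eq_mk_iff_isConj] at hab hcb ⊢
  exact eq_of_card_le_card_subtype_add_two hcard (singular ha) (singular hb) (singular hc) hab hcb

theorem mem_of_pow_mem_of_coprime_index {N : Subgroup G} [N.Normal] {x : G} {n : ℕ}
    (hn : n.Coprime N.index) (hx : x ^ n ∈ N) : x ∈ N := by
  rw [← QuotientGroup.eq_one_iff, QuotientGroup.mk_pow] at hx
  rw [← QuotientGroup.eq_one_iff, ← orderOf_eq_one_iff]
  exact Nat.eq_one_of_dvd_coprimes hn (orderOf_dvd_of_pow_eq_one hx) (orderOf_dvd_natCard _)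

theorem exists_pow_notMem_of_coprime_index [Finite G] (hp : p.Prime) {N : Subgroup G} [N.Normal]
    (hN : p.Coprime N.index) {x : G} (hx : x ∉ N) :
    ∃ k, (orderOf (x ^ k)).Coprime p ∧ x ^ k ∉ N := by
  refine ⟨ordProj[p] (orderOf x), ?_, fun h ↦ hx ?_⟩
  · rw [orderOf_pow_of_dvd (Nat.ordProj_pos _ _).ne' (Nat.ordProj_dvd _ _)]
    exact (Nat.coprime_ordCompl hp (orderOf_pos x).ne').symm
  · exact mem_of_pow_mem_of_coprime_index (hN.pow_left _) h

theorem IsPNilpotent.commute_of_mem_normal (hG : IsPNilpotent p G) {Q : Subgroup G}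
    (hQn : Q.Normal) (hQ : IsPGroup p Q) {y q : G} (hy : (orderOf y).Coprime p) (hq : q ∈ Q) :
    Commute y q := by
  obtain ⟨N, hNn, hNcard, n, hNindex⟩ := hG
  have hyN : y ∈ N := by
    refine mem_of_pow_mem_of_coprime_index (n := orderOf y) ?_ ?_
    · exact hNindex ▸ hy.pow_right n
    · exact pow_orderOf_eq_one y ▸ N.one_mem
  have hdisj : Disjoint N Q := IsPGroup.card.disjoint_of_coprime hQ hNcard
  exact Subgroup.commute_of_normal_of_disjoint N Q hNn hQn hdisj y q hyN hq

theorem orderOf_eq_of_forall_isConj {D : Subgroup G} [Finite D] [Fact p.Prime] (hD : IsPGroup p D)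
    {u : G} (hu : u ∈ D) (hu1 : u ≠ 1) (hconj : ∀ v ∈ D, v ≠ 1 → IsConj v u) : orderOf u = p := by
  have : Nontrivial D := ⟨⟨u, hu⟩, 1, by simpa using hu1⟩
  have hdvd : p ∣ Nat.card D := hD.card_eq_or_dvd.resolve_left Finite.one_lt_card.ne'
  obtain ⟨z, hz⟩ := exists_prime_orderOf_dvd_card' p hdvd
  have hz1 : (z : G) ≠ 1 := by
    have : z ≠ 1 := fun h ↦ (Fact.out : p.Prime).ne_one (by rw [← hz, h, orderOf_one])
    simpa using this
  have hzp : (z : G) ^ p = 1 := by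
    rw [← hz, ← Subgroup.orderOf_coe, pow_orderOf_eq_one]
  have hup : IsConj 1 (u ^ p) := hzp ▸ (hconj z z.2 hz1).pow p
  exact orderOf_eq_prime (isConj_one_right.1 hup) hu1

section NormalPSubgroup

variable {D : Subgroup G} [D.Normal]

theorem centralizer_le_of_sup_eq_top_s5 (hD : IsPGroup p D) (hindex : p.Coprime D.index)
    {E : Subgroup G} (hDE : D ⊔ E = ⊤) (hE : Disjoint E (Subgroup.centralizer (D : Set G))) :
    Subgroup.centralizer (D : Set G) ≤ D := by
  intro x hx
  obtain ⟨d, hd, e, he, rfl⟩ := Subgroup.mem_sup_of_normal_left.1 (hDE ▸ Subgroup.mem_top x)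
  -- `d` and `e` commute, so a `p`-power kills `d` and moves `d * e` into `E`.
  have hde : Commute d e := mul_left_cancel <| by
    rw [Subgroup.mem_centralizer_iff.1 hx d hd, mul_assoc]
  obtain ⟨k, hk⟩ := hD ⟨d, hd⟩
  have hdk : d ^ p ^ k = 1 := congrArg Subtype.val hk
  have hpow : (d * e) ^ p ^ k = 1 := by
    refine Subgroup.disjoint_def.1 hE ?_ (pow_mem hx _)
    rw [hde.mul_pow, hdk, one_mul]
    exact pow_mem he _
  exact mem_of_pow_mem_of_coprime_index (hindex.pow_left k) (hpow ▸ D.one_mem)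

theorem isConj_of_commute_of_notMem [Finite G] [Fact p.Prime] (hD : IsPGroup p D)
    (hcard : Nat.card (ConjClasses G) ≤
      Nat.card {c : ConjClasses G // ∀ g ∈ c.carrier, ¬ p ∣ orderOf g} + 2)
    {u y : G} (hu : u ∈ D) (hu1 : u ≠ 1) (hy : (orderOf y).Coprime p) (hyD : y ∉ D)
    (hyu : Commute y u) {v : G} (hv : v ∈ D) (hv1 : v ≠ 1) : IsConj v u := by
  have dvd_orderOf {d : G} (hd : d ∈ D) (hd1 : d ≠ 1) : p ∣ orderOf d := by
    simpa using hD.dvd_orderOf (g := ⟨d, hd⟩) (by simpa using hd1)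
  have not_isConj {d : G} (hd : d ∈ D) : ¬ IsConj d (y * u) := fun h ↦
    hyD <| (D.mul_mem_cancel_right hu).1 <| Group.conjugates_subset_normal hd h
  have hcop : (orderOf y).Coprime (orderOf u) := by
    simpa using (hD.orderOf_coprime hy.symm ⟨u, hu⟩).symm
  have dvd_orderOf_mul : p ∣ orderOf (y * u) := by
    rw [hyu.orderOf_mul_eq_mul_orderOf_of_coprime hcop]
    exact (dvd_orderOf hu hu1).mul_left _
  exact isConj_of_card_conjClasses_le hcard (dvd_orderOf hu hu1) dvd_orderOf_mul
    (dvd_orderOf hv hv1) (not_isConj hu) (not_isConj hv)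

theorem isMulCommutative_of_forall_isConj_s5 [Finite D] [Fact p.Prime] (hD : IsPGroup p D) {u : G}
    (hconj : ∀ v ∈ D, v ≠ 1 → IsConj v u) : IsMulCommutative D := by
  rcases subsingleton_or_nontrivial D with _ | _
  · infer_instance
  -- `Z(D)` is normal in `G`, so one nonidentity element of it brings in all of `D`.
  have := hD.center_nontrivial
  obtain ⟨⟨z, hz⟩, hz1⟩ := exists_ne (1 : Subgroup.center D)
  have hz1 : (z : G) ≠ 1 := by simpa using hz1
  have hzZ : (z : G) ∈ (Subgroup.center D).map D.subtype := ⟨z, hz, rfl⟩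
  rw [← Subgroup.center_eq_top_iff, eq_top_iff]
  intro v _
  by_cases hv1 : v = 1
  · exact hv1 ▸ one_mem _
  have hzv : IsConj (z : G) v :=
    (hconj z z.2 hz1).trans (hconj v v.2 (by simpa using hv1)).symm
  simpa using Group.conjugates_subset_normal hzZ hzv

end NormalPSubgroup

theorem stmt_5_general [Finite G] (hp : p.Prime) {D : Subgroup G} [D.Normal] (hD : IsPGroup p D)
    (hindex : p.Coprime D.index) (hcentralizer : Subgroup.centralizer (D : Set G) ≤ D)
    (hcard : Nat.card (ConjClasses G) ≤
      Nat.card {c : ConjClasses G // ∀ g ∈ c.carrier, ¬ p ∣ orderOf g} + 2)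
    (hnilp : ∀ u ∈ D, orderOf u = p → IsPNilpotent p (Subgroup.centralizer ({u} : Set G)))
    {u : G} (hu : u ∈ D) (hu1 : u ≠ 1) : Subgroup.centralizer ({u} : Set G) ≤ D := by
  have := Fact.mk hp
  intro x hx
  by_contra hxD
  obtain ⟨k, hyp, hyD⟩ := exists_pow_notMem_of_coprime_index hp hindex hxD
  set y := x ^ k
  have hyC : y ∈ Subgroup.centralizer {u} := pow_mem hx k
  have hconj : ∀ v ∈ D, v ≠ 1 → IsConj v u := fun v hv hv1 ↦
    isConj_of_commute_of_notMem hD hcard hu hu1 hyp hyD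
      (Subgroup.mem_centralizer_singleton_iff.1 hyC) hv hv1
  have : IsMulCommutative D := isMulCommutative_of_forall_isConj_s5 hD hconj
  have hDC : D ≤ Subgroup.centralizer {u} :=
    (Subgroup.le_centralizer D).trans (Subgroup.centralizer_le (by simpa using hu))
  refine hyD (hcentralizer (Subgroup.mem_centralizer_iff.2 fun d hd ↦ ?_))
  have hcomm : Commute (⟨y, hyC⟩ : Subgroup.centralizer {u}) ⟨d, hDC hd⟩ :=
    (hnilp u hu (orderOf_eq_of_forall_isConj hD hu hu1 hconj)).commute_of_mem_normal
      (Subgroup.Normal.subgroupOf ‹_› _) hD.comap_subtype (by simpa using hyp)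
      (Subgroup.mem_subgroupOf.2 hd)
  exact congrArg Subtype.val hcomm.eq.symm

end

/-- Hypotheses: `G` is a finite group with normal Sylow `p`-subgroup `D`, `E` is a
`p'`-complement acting faithfully on `D`, `k(G) - ℓ_p(G) = 2`, and the centralizer of
every element of `D` of order `p` is `p`-nilpotent. -/
theorem stmt_5 {p : ℕ} (hp : p.Prime) {G : Type*} [Group G] [Fintype G]
    (D E : Subgroup G)
    (hDn : D.Normal)
    (hDpgrp : IsPGroup p D)
    (hDsyl : ¬ p ∣ D.index)
    (hEp' : Nat.Coprime (Nat.card E) p)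
    (hDEinf : D ⊓ E = ⊥)
    (hDEsup : D ⊔ E = ⊤)
    (hfaith : ∀ y ∈ E, (∀ d ∈ D, y * d = d * y) → y = 1)
    (hkl : Nat.card (ConjClasses G) =
      Nat.card {c : ConjClasses G // ∀ g ∈ c.carrier, ¬ p ∣ orderOf g} + 2)
    (hnilp : ∀ u : G, u ∈ D → orderOf u = p →
      ∃ N : Subgroup (Subgroup.centralizer ({u} : Set G)), N.Normal ∧
        Nat.Coprime (Nat.card N) p ∧ ∃ n : ℕ, N.index = p ^ n) :
    ∀ u : G, u ∈ D → u ≠ 1 → Subgroup.centralizer ({u} : Set G) ≤ D := by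
  have hindex : p.Coprime D.index := hp.coprime_iff_not_dvd.2 hDsyl
  have hdisj : Disjoint E (Subgroup.centralizer (D : Set G)) :=
    Subgroup.disjoint_def.2 fun {y} hyE hyC ↦ hfaith y hyE fun d hd ↦ (hyC d hd).symm
  exact fun u hu hu1 ↦ stmt_5_general hp hDpgrp hindex
    (centralizer_le_of_sup_eq_top_s5 hDpgrp hindex hDEsup hdisj) hkl.le hnilp hu hu1
end

section
/- Let F be a finite field, let n ≥ 2, let ℓ be a prime with ℓ ≥ 5, let G = SL_n(F) be the special linear group of degree n over F, and let Z be a subgroup of the center of G (hence Z is normal in G). If the quotient group G/Z has an abelian Sylow ℓ-subgroup, then ℓ does not divide the order of Z, and moreover every Sylow ℓ-subgroup of G itself is abelian. -/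
/-!
If `ℓ` divides `|Z|`, then `Z` contains a scalar matrix of order `ℓ`, so there is a root of unity
`ζ` of order `ℓ` with `ζ ^ n = 1`, whence `ℓ ≤ n`. An even permutation matrix of order `ℓ`
normalizes the `ℓ`-group of diagonal matrices of exponent `ℓ`, and together they generate an
`ℓ`-group `Q`. If the permutation moves `i` to `j` and `j` to a third index, then the commutator of
its matrix with the diagonal matrix having entries `ζ` at `i`, `ζ⁻¹` at `j` and `1` elsewhere is
scalar only if `ζ ^ 3 = 1`, which `ℓ ≥ 5` excludes. So the image of `Q` in `G ⧸ Z` is not abelian.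
Once `ℓ` does not divide `|Z|`, an `ℓ`-subgroup of `G` meets `Z` trivially, while its commutator
subgroup lies in `Z`.
-/

open Matrix Matrix.SpecialLinearGroup
open scoped commutatorElement

section GroupTheory

variable {G : Type*} [Group G] {p : ℕ}

theorem sylow_mul_comm_of_exists [Fact p.Prime] [Finite (Sylow p G)]
    (h : ∃ P : Sylow p G, ∀ a ∈ P, ∀ b ∈ P, a * b = b * a) (Q : Sylow p G) :
    ∀ a ∈ Q, ∀ b ∈ Q, a * b = b * a := by
  obtain ⟨P, hP⟩ := h
  intro a ha b hb
  let e := Q.equiv P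
  have hcomm : (⟨a, ha⟩ * ⟨b, hb⟩ : Q) = ⟨b, hb⟩ * ⟨a, ha⟩ := e.injective <| by
    simpa only [map_mul] using Subtype.ext (hP _ (e ⟨a, ha⟩).2 _ (e ⟨b, hb⟩).2)
  exact congrArg Subtype.val hcomm

theorem commutator_le_of_sylow_quotient_mul_comm {Z : Subgroup G} [Z.Normal]
    (h : ∀ P : Sylow p (G ⧸ Z), ∀ a ∈ P, ∀ b ∈ P, a * b = b * a)
    {Q : Subgroup G} (hQ : IsPGroup p Q) : ⁅Q, Q⁆ ≤ Z := by
  obtain ⟨P, hP⟩ := (hQ.map (QuotientGroup.mk' Z)).exists_le_sylow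
  rw [Subgroup.commutator_le]
  intro a ha b hb
  rw [← QuotientGroup.ker_mk' Z, MonoidHom.mem_ker, map_commutatorElement,
    commutatorElement_eq_one_iff_mul_comm]
  exact h P _ (hP (Subgroup.mem_map_of_mem _ ha)) _ (hP (Subgroup.mem_map_of_mem _ hb))

end GroupTheory

section Permutations

variable {ι : Type*} [Fintype ι] [DecidableEq ι] {p : ℕ}

theorem exists_alternatingGroup_orderOf_eq_prime (hp : p.Prime) (hp2 : p ≠ 2)
    (hpι : p ≤ Fintype.card ι) : ∃ σ : alternatingGroup ι, orderOf σ = p := by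
  have := Fact.mk hp
  have : Nontrivial ι := Fintype.one_lt_card_iff_nontrivial.mp (hp.one_lt.trans_le hpι)
  apply exists_prime_orderOf_dvd_card
  have hdvd : p ∣ 2 * Fintype.card (alternatingGroup ι) := by
    rw [two_mul_card_alternatingGroup, Fintype.card_perm]
    exact hp.dvd_factorial.mpr hpι
  exact ((Nat.coprime_primes hp Nat.prime_two).mpr hp2).dvd_of_dvd_mul_left hdvd

theorem perm_apply_apply_ne_of_odd_pow_eq_one {α : Type*} {σ : Equiv.Perm α} {k : ℕ} (hk : Odd k)
    (hσ : σ ^ k = 1) {i : α} (hi : σ i ≠ i) : σ (σ i) ≠ i := by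
  intro h
  have hperk : Function.IsPeriodicPt σ k i := by
    rw [Function.IsPeriodicPt, ← Equiv.Perm.coe_pow, hσ]
    rfl
  have hper2 : Function.IsPeriodicPt σ 2 i := h
  have hper1 := hper2.gcd hperk
  rw [Nat.coprime_two_left.mpr hk] at hper1
  exact hi hper1

end Permutations

section SpecialLinear

variable {ι R : Type*} [Fintype ι] [DecidableEq ι] [CommRing R]

variable (R) in
/-- The permutation matrix of an even permutation, as a homomorphism into the special linear
group. As `Equiv.Perm.permMatrix` reverses products, `σ` is sent to the matrix of `σ⁻¹`. -/
def evenPermSL : alternatingGroup ι →* Matrix.SpecialLinearGroup ι R where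
  toFun σ := ⟨permMatrixHom (σ : Equiv.Perm ι), by
    simp [det_permutation, Equiv.Perm.mem_alternatingGroup.mp σ.2]⟩
  map_one' := Subtype.ext (map_one _)
  map_mul' σ τ := Subtype.ext (map_mul permMatrixHom (σ : Equiv.Perm ι) τ)

theorem coe_evenPermSL (σ : alternatingGroup ι) :
    (evenPermSL R σ : Matrix ι ι R) = (σ⁻¹ : Equiv.Perm ι).permMatrix R := rfl

theorem coe_evenPermSL_conj_of_eq_diagonal (σ : alternatingGroup ι)
    {g : Matrix.SpecialLinearGroup ι R} {v : ι → R} (hg : (g : Matrix ι ι R) = diagonal v) :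
    ((evenPermSL R σ * g * (evenPermSL R σ)⁻¹ : Matrix.SpecialLinearGroup ι R) : Matrix ι ι R) =
      diagonal (v ∘ (σ⁻¹ : Equiv.Perm ι)) := by
  rw [← map_inv, Matrix.SpecialLinearGroup.coe_mul, Matrix.SpecialLinearGroup.coe_mul,
    coe_evenPermSL, coe_evenPermSL, hg, Equiv.Perm.permMatrix, Equiv.Perm.permMatrix,
    PEquiv.toMatrix_toPEquiv_mul, PEquiv.mul_toMatrix_toPEquiv]
  exact submatrix_diagonal_equiv v _

variable (ι R) in
/-- The subgroup of diagonal matrices in the special linear group whose entries are `ℓ`-th roots of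
unity. The entries are encoded together as an `ℓ`-th root of unity of the ring `ι → R`. -/
def diagonalTorsionSL (ℓ : ℕ) : Subgroup (Matrix.SpecialLinearGroup ι R) :=
  ((rootsOfUnity ℓ (ι → R)).map (Units.map (diagonalRingHom ι R).toMonoidHom)).comap toGL

theorem mem_diagonalTorsionSL_iff {ℓ : ℕ} [NeZero ℓ] {g : Matrix.SpecialLinearGroup ι R} :
    g ∈ diagonalTorsionSL ι R ℓ ↔ ∃ v : ι → R, v ^ ℓ = 1 ∧ (g : Matrix ι ι R) = diagonal v := by
  constructor
  · rintro ⟨u, hu, hug⟩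
    exact ⟨u, (mem_rootsOfUnity' ℓ u).mp hu, (congrArg Units.val hug).symm⟩
  · rintro ⟨v, hv, hgv⟩
    exact ⟨_, (rootsOfUnity.mkOfPowEq v hv).2, Units.ext hgv.symm⟩

theorem isPGroup_diagonalTorsionSL (ℓ : ℕ) : IsPGroup ℓ (diagonalTorsionSL ι R ℓ) := by
  have hroots : IsPGroup ℓ (rootsOfUnity ℓ (ι → R)) := fun u ↦
    ⟨1, by rw [pow_one]; exact Subtype.ext u.2⟩
  exact (hroots.map _).comap_of_injective toGL toGL_injective

theorem range_evenPermSL_le_normalizer_diagonalTorsionSL (ℓ : ℕ) [NeZero ℓ] :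
    (evenPermSL R).range ≤
      Subgroup.normalizer (diagonalTorsionSL ι R ℓ : Set (Matrix.SpecialLinearGroup ι R)) := by
  rw [Subgroup.le_normalizer_iff]
  rintro _ ⟨σ, rfl⟩ g hg
  obtain ⟨v, hv, hgv⟩ := mem_diagonalTorsionSL_iff.mp hg
  exact mem_diagonalTorsionSL_iff.mpr
    ⟨v ∘ (σ⁻¹ : Equiv.Perm ι), funext fun _ ↦ congrFun hv _,
      coe_evenPermSL_conj_of_eq_diagonal σ hgv⟩

theorem exists_apply_eq_mul_of_commutator_evenPermSL_mem_center {σ : alternatingGroup ι}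
    {g : Matrix.SpecialLinearGroup ι R} {v : ι → R} (hg : (g : Matrix ι ι R) = diagonal v)
    (hσg : ⁅evenPermSL R σ, g⁆ ∈ Subgroup.center (Matrix.SpecialLinearGroup ι R)) :
    ∃ r : R, ∀ i, v i = r * v ((σ : Equiv.Perm ι) i) := by
  obtain ⟨r, -, hr⟩ := mem_center_iff.mp hσg
  have hconj : diagonal (v ∘ (σ⁻¹ : Equiv.Perm ι)) = scalar ι r * diagonal v := by
    rw [← coe_evenPermSL_conj_of_eq_diagonal σ hg, hr, ← hg, ← Matrix.SpecialLinearGroup.coe_mul,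
      commutatorElement_def, inv_mul_cancel_right]
  rw [scalar_apply, diagonal_mul_diagonal, diagonal_injective.eq_iff] at hconj
  refine ⟨r, fun i ↦ ?_⟩
  simpa using congrFun hconj ((σ : Equiv.Perm ι) i)

/-- The value at `ζ` of the coroot of `SL` attached to `(i, j)`: the diagonal matrix with `ζ` in
position `i`, `ζ⁻¹` in position `j`, and `1` elsewhere. -/
def corootSL (i j : ι) (ζ : Rˣ) : Matrix.SpecialLinearGroup ι R :=
  ⟨diagonal (Pi.mulSingle i (ζ : R) * Pi.mulSingle j (↑ζ⁻¹ : R)), by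
    simp [det_diagonal, Finset.prod_mul_distrib]⟩

theorem corootSL_mem_diagonalTorsionSL (i j : ι) {ζ : Rˣ} {ℓ : ℕ} [NeZero ℓ] (hζ : ζ ^ ℓ = 1) :
    corootSL i j ζ ∈ diagonalTorsionSL ι R ℓ := by
  refine mem_diagonalTorsionSL_iff.mpr ⟨_, ?_, rfl⟩
  rw [mul_pow, ← Pi.mulSingle_pow, ← Pi.mulSingle_pow, ← Units.val_pow_eq_pow_val,
    ← Units.val_pow_eq_pow_val, inv_pow, hζ]
  simp

theorem commutator_evenPermSL_corootSL_notMem_center {σ : alternatingGroup ι} {i j k : ι}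
    (hij : (σ : Equiv.Perm ι) i = j) (hjk : (σ : Equiv.Perm ι) j = k) (hi : i ≠ j) (hj : j ≠ k)
    (hk : k ≠ i) {ζ : Rˣ} (hζ : ζ ^ 3 ≠ 1) :
    ⁅evenPermSL R σ, corootSL i j ζ⁆ ∉ Subgroup.center (Matrix.SpecialLinearGroup ι R) := by
  intro hcenter
  obtain ⟨r, hr⟩ := exists_apply_eq_mul_of_commutator_evenPermSL_mem_center rfl hcenter
  have hri : (ζ : R) = r * ↑ζ⁻¹ := by simpa [hij, hi, hi.symm] using hr i
  have hrj : (↑ζ⁻¹ : R) = r := by simpa [hjk, hi, hi.symm, hj, hj.symm, hk, hk.symm] using hr j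
  have hζinv : ζ = ζ⁻¹ * ζ⁻¹ := Units.ext (by rw [Units.val_mul, hri, ← hrj])
  apply hζ
  rw [eq_inv_mul_iff_mul_eq, eq_inv_iff_mul_eq_one] at hζinv
  rw [pow_succ, sq, hζinv]

theorem exists_isPGroup_not_commutator_le_center {ℓ : ℕ} (hℓ : ℓ.Prime) (hℓ5 : 5 ≤ ℓ)
    (hℓι : ℓ ≤ Fintype.card ι) {ζ : Rˣ} (hζ : orderOf ζ = ℓ) :
    ∃ Q : Subgroup (Matrix.SpecialLinearGroup ι R), IsPGroup ℓ Q ∧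
      ¬ ⁅Q, Q⁆ ≤ Subgroup.center (Matrix.SpecialLinearGroup ι R) := by
  have : NeZero ℓ := ⟨hℓ.ne_zero⟩
  have hℓ2 : ℓ ≠ 2 := by lia
  obtain ⟨σ, hσ⟩ := exists_alternatingGroup_orderOf_eq_prime hℓ hℓ2 hℓι
  have hσpow : (σ : Equiv.Perm ι) ^ ℓ = 1 := by
    rw [← hσ, ← Subgroup.orderOf_coe, pow_orderOf_eq_one]
  obtain ⟨i, hi⟩ : ∃ i, (σ : Equiv.Perm ι) i ≠ i := by
    by_contra! hfix
    have hσ1 : σ = 1 := Subtype.ext (Equiv.ext hfix)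
    rw [hσ1, orderOf_one] at hσ
    exact hℓ.one_lt.ne hσ
  have hζ3 : ζ ^ 3 ≠ 1 := fun h ↦ by
    have := Nat.le_of_dvd three_pos (orderOf_dvd_of_pow_eq_one h)
    lia
  have hcyclic : IsPGroup ℓ ((Subgroup.zpowers σ).map (evenPermSL R)) :=
    (IsPGroup.of_card (n := 1) (by rw [Nat.card_zpowers, hσ, pow_one])).map _
  refine ⟨(Subgroup.zpowers σ).map (evenPermSL R) ⊔ diagonalTorsionSL ι R ℓ,
    hcyclic.to_sup_of_normal_right' (isPGroup_diagonalTorsionSL ℓ)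
      ((Subgroup.map_le_range _ _).trans (range_evenPermSL_le_normalizer_diagonalTorsionSL ℓ)),
    fun hle ↦ ?_⟩
  refine commutator_evenPermSL_corootSL_notMem_center rfl rfl hi.symm
    (fun h ↦ hi ((σ : Equiv.Perm ι).injective h.symm))
    (perm_apply_apply_ne_of_odd_pow_eq_one (hℓ.odd_of_ne_two hℓ2) hσpow hi) hζ3
    (hle (Subgroup.commutator_mem_commutator ?_ ?_))
  · exact Subgroup.mem_sup_left (Subgroup.mem_map_of_mem _ (Subgroup.mem_zpowers σ))
  · exact Subgroup.mem_sup_right (corootSL_mem_diagonalTorsionSL _ _ (hζ ▸ pow_orderOf_eq_one ζ))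

theorem exists_unit_orderOf_eq_of_mem_center {z : Matrix.SpecialLinearGroup ι R}
    (hz : z ∈ Subgroup.center (Matrix.SpecialLinearGroup ι R)) :
    ∃ ζ : Rˣ, orderOf ζ = orderOf z ∧ ζ ^ max (Fintype.card ι) 1 = 1 := by
  let ζ := center_equiv_rootsOfUnity ⟨z, hz⟩
  refine ⟨ζ, ?_, ζ.2⟩
  rw [Subgroup.orderOf_coe, MulEquiv.orderOf_eq, Subgroup.orderOf_mk]

theorem not_dvd_card_of_sylow_quotient_mul_comm {ℓ : ℕ} (hℓ : ℓ.Prime) (hℓ5 : 5 ≤ ℓ)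
    {Z : Subgroup (Matrix.SpecialLinearGroup ι R)} [Finite Z] [Z.Normal]
    (hZ : Z ≤ Subgroup.center (Matrix.SpecialLinearGroup ι R))
    (hab : ∀ P : Sylow ℓ (Matrix.SpecialLinearGroup ι R ⧸ Z), ∀ a ∈ P, ∀ b ∈ P, a * b = b * a) :
    ¬ ℓ ∣ Nat.card Z := by
  intro hdvd
  have := Fact.mk hℓ
  obtain ⟨z, hz⟩ := exists_prime_orderOf_dvd_card' ℓ hdvd
  obtain ⟨ζ, hζz, hζpow⟩ := exists_unit_orderOf_eq_of_mem_center (hZ z.2)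
  have hζ : orderOf ζ = ℓ := by rw [hζz, Subgroup.orderOf_coe, hz]
  have hℓι : ℓ ≤ Fintype.card ι := by
    have := Nat.le_of_dvd (by lia) (hζ ▸ orderOf_dvd_of_pow_eq_one hζpow)
    lia
  obtain ⟨Q, hQ, hcomm⟩ := exists_isPGroup_not_commutator_le_center (ι := ι) hℓ hℓ5 hℓι hζ
  exact hcomm ((commutator_le_of_sylow_quotient_mul_comm hab hQ).trans hZ)

end SpecialLinear

theorem stmt_7_general {ι R : Type*} [Fintype ι] [DecidableEq ι] [CommRing R]
    {ℓ : ℕ} (hℓ : ℓ.Prime) (hℓ5 : 5 ≤ ℓ)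
    (Z : Subgroup (Matrix.SpecialLinearGroup ι R)) [Finite Z] [Z.Normal]
    (hZ : Z ≤ Subgroup.center (Matrix.SpecialLinearGroup ι R))
    (hab : ∀ P : Sylow ℓ (Matrix.SpecialLinearGroup ι R ⧸ Z), ∀ a ∈ P, ∀ b ∈ P, a * b = b * a) :
    ¬ ℓ ∣ Nat.card Z ∧
      ∀ P : Sylow ℓ (Matrix.SpecialLinearGroup ι R), ∀ a ∈ P, ∀ b ∈ P, a * b = b * a := by
  have hndvd := not_dvd_card_of_sylow_quotient_mul_comm hℓ hℓ5 hZ hab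
  refine ⟨hndvd, fun P a ha b hb ↦ ?_⟩
  have hdisj : Disjoint (P : Subgroup (Matrix.SpecialLinearGroup ι R)) Z :=
    P.isPGroup'.disjoint_of_coprime IsPGroup.card (hℓ.coprime_iff_not_dvd.mpr hndvd)
  have hcomm := Subgroup.commutator_mem_commutator ha hb
  rw [← commutatorElement_eq_one_iff_mul_comm]
  exact Subgroup.disjoint_def.mp hdisj (Subgroup.commutator_le_self _ hcomm)
    (commutator_le_of_sylow_quotient_mul_comm hab P.isPGroup' hcomm)

/-- Kessar's lemma for the special linear case: if `ℓ ≥ 5` is a prime, `Z` is a central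
subgroup of `G = SLₙ(F)` (`n ≥ 2`, `F` a finite field) and `G/Z` has an abelian Sylow
`ℓ`-subgroup, then `ℓ` does not divide `|Z|` and every Sylow `ℓ`-subgroup of `G` is
abelian. -/
theorem stmt_7 {F : Type*} [Field F] [Fintype F] {n : ℕ} (hn : 2 ≤ n)
    {ℓ : ℕ} (hℓ : ℓ.Prime) (hℓ5 : 5 ≤ ℓ)
    (Z : Subgroup (Matrix.SpecialLinearGroup (Fin n) F))
    (hZ : Z ≤ Subgroup.center (Matrix.SpecialLinearGroup (Fin n) F)) [Z.Normal]
    (hab : ∃ P : Sylow ℓ (Matrix.SpecialLinearGroup (Fin n) F ⧸ Z),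
      ∀ a ∈ P, ∀ b ∈ P, a * b = b * a) :
    ¬ ℓ ∣ Nat.card Z ∧
      ∀ P : Sylow ℓ (Matrix.SpecialLinearGroup (Fin n) F),
        ∀ a ∈ P, ∀ b ∈ P, a * b = b * a := by
  have := Fact.mk hℓ
  exact stmt_7_general hℓ hℓ5 Z hZ (sylow_mul_comm_of_exists hab)
end

section
/- Let F be a finite field with q elements, let n be a natural number, and let ℓ be a prime with ℓ ≥ 5, ℓ dividing q − 1, and ℓ ≤ n. Then for every subgroup Z of the center of SL_n(F), every Sylow ℓ-subgroup of the quotient group SL_n(F)/Z is nonabelian. -/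
/-!
The permutation matrices of an `ℓ`-group of permutations and the diagonal matrices with entries in
an `ℓ`-group of units generate an `ℓ`-subgroup of `GL`, because the former normalize the latter.
Let `σ` be a permutation of order `ℓ`, let `ζ` be a unit of order `ℓ`, and pick `i` with `σ i ≠ i`.
As `ℓ` is odd, the permutation matrix of `σ` lies in `SL`, and so does the diagonal matrix with
entry `ζ` at `i`, `ζ⁻¹` at `σ i` and `1` elsewhere. Their commutator is diagonal with entry
`ζ ^ 2 ≠ 1` at `σ i` and entry `1` at any index outside `{i, σ i, σ (σ i)}`, so it is not scalar
once there are four indices. Hence the image of the `ℓ`-subgroup in any central quotient of `SL` is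
nonabelian, and by Sylow's theorems so is every Sylow `ℓ`-subgroup of that quotient.
-/

open scoped commutatorElement

section PGroups

variable {G : Type*} [Group G] {p : ℕ}

theorem isPGroup_zpowers_of_orderOf_eq {g : G} (hg : orderOf g = p) :
    IsPGroup p (Subgroup.zpowers g) :=
  .of_card (n := 1) (by rw [Nat.card_zpowers, hg, pow_one])

theorem isPGroup_subgroup_pi {ι : Type*} [Finite ι] {A : Subgroup G} (hA : IsPGroup p A) :
    IsPGroup p (Subgroup.pi Set.univ fun _ : ι ↦ A) := by
  have := Fintype.ofFinite ι
  rintro ⟨d, hd⟩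
  choose k hk using fun i ↦ hA ⟨d i, hd i trivial⟩
  refine ⟨Finset.univ.sup k, Subtype.ext (funext fun i ↦ ?_)⟩
  have hki : d i ^ p ^ k i = 1 := congrArg Subtype.val (hk i)
  obtain ⟨m, hm⟩ := pow_dvd_pow p (Finset.le_sup (f := k) (Finset.mem_univ i))
  simp [hm, pow_mul, hki]

theorem isMulCommutative_of_isMulCommutative_sylow [Fact p.Prime] [Finite (Sylow p G)]
    (P : Sylow p G) [IsMulCommutative P] {H : Subgroup G} (hH : IsPGroup p H) :
    IsMulCommutative H := by
  obtain ⟨Q, hHQ⟩ := hH.exists_le_sylow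
  refine .of_setLike_mul_comm fun a ha b hb ↦ ?_
  have hcomm : (⟨a, hHQ ha⟩ * ⟨b, hHQ hb⟩ : Q) = ⟨b, hHQ hb⟩ * ⟨a, hHQ ha⟩ :=
    (Q.equiv P).injective (by rw [map_mul, map_mul, mul_comm'])
  exact congrArg Subtype.val hcomm

theorem commutatorElement_mem_of_isMulCommutative_sylow_quotient [Fact p.Prime]
    {N : Subgroup G} [N.Normal] [Finite (Sylow p (G ⧸ N))] (P : Sylow p (G ⧸ N))
    [IsMulCommutative P] {H : Subgroup G} (hH : IsPGroup p H) {a b : G} (ha : a ∈ H) (hb : b ∈ H) :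
    ⁅a, b⁆ ∈ N := by
  have := isMulCommutative_of_isMulCommutative_sylow P (hH.map (QuotientGroup.mk' N))
  rw [← QuotientGroup.ker_mk' N, MonoidHom.mem_ker, map_commutatorElement,
    commutatorElement_eq_one_iff_mul_comm]
  exact setLike_mul_comm (Subgroup.mem_map_of_mem _ ha) (Subgroup.mem_map_of_mem _ hb)

end PGroups

section Permutations

variable {ι : Type*} [Fintype ι]

theorem exists_perm_orderOf_eq {p : ℕ} [hp : Fact p.Prime] (hle : p ≤ Fintype.card ι) :
    ∃ σ : Equiv.Perm ι, orderOf σ = p :=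
  exists_prime_orderOf_dvd_card' p (by
    rwa [Nat.card_perm, Nat.card_eq_fintype_card, hp.out.dvd_factorial])

theorem sign_eq_one_of_odd_orderOf [DecidableEq ι] {σ : Equiv.Perm ι} (hσ : Odd (orderOf σ)) :
    Equiv.Perm.sign σ = 1 := by
  have hpow : Equiv.Perm.sign σ ^ orderOf σ = 1 := by rw [← map_pow, pow_orderOf_eq_one, map_one]
  rwa [Int.units_pow_eq_pow_mod_two, Nat.odd_iff.mp hσ, pow_one] at hpow

theorem exists_prod_eq_one_and_div_ne_div {A : Type*} [CommGroup A] {ζ : A} (hζ : ζ ^ 2 ≠ 1)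
    {σ : Equiv.Perm ι} (hσ : σ ≠ 1) (hι : 4 ≤ Fintype.card ι) :
    ∃ d : ι → A, (∀ i, d i ∈ Subgroup.zpowers ζ) ∧ ∏ i, d i = 1 ∧
      ∃ j k, d (σ.symm j) / d j ≠ d (σ.symm k) / d k := by
  classical
  obtain ⟨i, hi⟩ : ∃ i, σ i ≠ i := by simpa [Equiv.Perm.ext_iff] using hσ
  obtain ⟨k, -, hk⟩ : ∃ k ∈ Finset.univ, k ∉ ({i, σ i, σ (σ i)} : Finset ι) :=
    Finset.exists_mem_notMem_of_card_lt_card (Finset.card_le_three.trans_lt hι)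
  simp only [Finset.mem_insert, Finset.mem_singleton, not_or] at hk
  obtain ⟨hk₀, hk₁, hk₂⟩ := hk
  refine ⟨Pi.mulSingle i ζ * Pi.mulSingle (σ i) ζ⁻¹, fun j ↦ ?_, ?_, σ i, k, ?_⟩
  · exact mul_mem
      (by rw [Pi.mulSingle_apply]; split_ifs <;> simp)
      (by rw [Pi.mulSingle_apply]; split_ifs <;> simp)
  · simp [Finset.prod_mul_distrib]
  · have hσk₀ : σ.symm k ≠ i := by rwa [Ne, Equiv.symm_apply_eq]
    have hσk₁ : σ.symm k ≠ σ i := by rwa [Ne, Equiv.symm_apply_eq]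
    simpa [Pi.mulSingle_apply, hi, hi.symm, hk₀, hk₁, hσk₀, hσk₁, ← pow_two] using hζ

end Permutations

section MonomialMatrices

variable {ι R : Type*} [Fintype ι] [DecidableEq ι] [CommRing R]

/-- The invertible diagonal matrix with prescribed unit entries, as a homomorphism to `GL`. -/
def diagonalGL : (ι → Rˣ) →* GL ι R :=
  ((Matrix.diagonalRingHom ι R).toMonoidHom.comp ((Units.coeHom R).compLeft ι)).toHomUnits

/-- The permutation matrix of a permutation, as a homomorphism to `GL`. The matrix of `σ` sends the
`i`-th standard basis vector to the `σ i`-th one, so it is `Equiv.Perm.permMatrix` of `σ⁻¹`. -/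
def permGL : Equiv.Perm ι →* GL ι R :=
  Matrix.permMatrixHom.toHomUnits

/-- The group of monomial matrices generated by the permutation matrices of the elements of `S` and
the diagonal matrices with entries in `A`. -/
def monomialSubgroup (S : Subgroup (Equiv.Perm ι)) (A : Subgroup Rˣ) : Subgroup (GL ι R) :=
  S.map permGL ⊔ (Subgroup.pi Set.univ fun _ ↦ A).map diagonalGL

theorem det_diagonalGL (d : ι → Rˣ) : (diagonalGL d).det = ∏ i, d i :=
  Units.ext (by simp [diagonalGL])

theorem det_permGL (σ : Equiv.Perm ι) :
    (permGL σ : GL ι R).det = Units.map (Int.castRingHom R).toMonoidHom (Equiv.Perm.sign σ) :=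
  Units.ext (by simp [permGL])

theorem permGL_mul_diagonalGL_mul_inv (σ : Equiv.Perm ι) (d : ι → Rˣ) :
    permGL σ * diagonalGL d * (permGL σ)⁻¹ = diagonalGL (d ∘ σ.symm) := by
  rw [mul_inv_eq_iff_eq_mul]
  ext i j
  by_cases hij : σ.symm i = j <;>
    simp [permGL, diagonalGL, Equiv.Perm.permMatrix, PEquiv.toMatrix_apply, Equiv.toPEquiv_apply,
      hij]

theorem commutatorElement_permGL_diagonalGL (σ : Equiv.Perm ι) (d : ι → Rˣ) :
    ⁅(permGL σ : GL ι R), diagonalGL d⁆ = diagonalGL (d ∘ σ.symm / d) := by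
  rw [commutatorElement_def, permGL_mul_diagonalGL_mul_inv, map_div, div_eq_mul_inv]

theorem eq_of_diagonalGL_mem_center {d : ι → Rˣ}
    (hd : diagonalGL d ∈ Subgroup.center (GL ι R)) (i j : ι) : d i = d j := by
  obtain ⟨r, hr⟩ := Matrix.GeneralLinearGroup.mem_center_iff_val_mem_range_scalar.mp hd
  have hentry (k : ι) : r = d k := by simpa [diagonalGL] using congrFun (congrFun hr k) k
  exact Units.ext ((hentry i).symm.trans (hentry j))

theorem isPGroup_monomialSubgroup {p : ℕ} {S : Subgroup (Equiv.Perm ι)} {A : Subgroup Rˣ}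
    (hS : IsPGroup p S) (hA : IsPGroup p A) : IsPGroup p (monomialSubgroup S A) := by
  refine (hS.map permGL).to_sup_of_normal_right' ((isPGroup_subgroup_pi hA).map diagonalGL)
    (Subgroup.le_normalizer_iff.mpr ?_)
  rintro _ ⟨σ, -, rfl⟩ _ ⟨d, hd, rfl⟩
  exact ⟨d ∘ σ.symm, fun i _ ↦ hd _ trivial, (permGL_mul_diagonalGL_mul_inv σ d).symm⟩

theorem exists_isPGroup_commutatorElement_notMem_center {p : ℕ} [hp : Fact p.Prime] (hp2 : p ≠ 2)
    {ζ : Rˣ} (hζ : orderOf ζ = p) (hle : p ≤ Fintype.card ι) (hι : 4 ≤ Fintype.card ι) :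
    ∃ H : Subgroup (Matrix.SpecialLinearGroup ι R), IsPGroup p H ∧
      ∃ a ∈ H, ∃ b ∈ H, ⁅a, b⁆ ∉ Subgroup.center (Matrix.SpecialLinearGroup ι R) := by
  obtain ⟨σ, hσ⟩ := exists_perm_orderOf_eq hle
  have hσ1 : σ ≠ 1 := by rw [Ne, ← orderOf_eq_one_iff, hσ]; exact hp.out.ne_one
  have hζ2 : ζ ^ 2 ≠ 1 := by
    rwa [Ne, ← orderOf_dvd_iff_pow_eq_one, hζ, Nat.prime_dvd_prime_iff_eq hp.out Nat.prime_two]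
  obtain ⟨d, hdζ, hdprod, j, k, hjk⟩ := exists_prod_eq_one_and_div_ne_div hζ2 hσ1 hι
  have hsign := sign_eq_one_of_odd_orderOf (hσ ▸ hp.out.odd_of_ne_two hp2)
  obtain ⟨a, ha⟩ : permGL σ ∈ Set.range (Matrix.SpecialLinearGroup.toGL (n := ι) (R := R)) := by
    simp [Matrix.SpecialLinearGroup.range_toGL, det_permGL, hsign]
  obtain ⟨b, hb⟩ : diagonalGL d ∈ Set.range Matrix.SpecialLinearGroup.toGL := by
    simp [Matrix.SpecialLinearGroup.range_toGL, det_diagonalGL, hdprod]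
  have hM : IsPGroup p (monomialSubgroup (Subgroup.zpowers σ) (Subgroup.zpowers ζ)) :=
    isPGroup_monomialSubgroup (isPGroup_zpowers_of_orderOf_eq hσ)
      (isPGroup_zpowers_of_orderOf_eq hζ)
  refine ⟨_, hM.comap_of_injective _ Matrix.SpecialLinearGroup.toGL_injective, a, ?_, b, ?_, ?_⟩
  · rw [Subgroup.mem_comap, ha]
    exact Subgroup.mem_sup_left (Subgroup.mem_map_of_mem _ (Subgroup.mem_zpowers σ))
  · rw [Subgroup.mem_comap, hb]
    exact Subgroup.mem_sup_right (Subgroup.mem_map_of_mem _ fun i _ ↦ hdζ i)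
  · rw [← Matrix.SpecialLinearGroup.toGL_mem_center_iff, map_commutatorElement, ha, hb,
      commutatorElement_permGL_diagonalGL]
    exact fun hcenter ↦ hjk (eq_of_diagonalGL_mem_center hcenter j k)

end MonomialMatrices

theorem stmt_8_general {R ι : Type*} [CommRing R] [Finite R] [Fintype ι] [DecidableEq ι] {ℓ : ℕ}
    (hℓ : ℓ.Prime) (hℓ2 : ℓ ≠ 2) (hdvd : ℓ ∣ Nat.card Rˣ)
    (hle : ℓ ≤ Fintype.card ι) (hι : 4 ≤ Fintype.card ι)
    (Z : Subgroup (Matrix.SpecialLinearGroup ι R))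
    (hZ : Z ≤ Subgroup.center (Matrix.SpecialLinearGroup ι R)) [Z.Normal]
    (P : Sylow ℓ (Matrix.SpecialLinearGroup ι R ⧸ Z)) : ¬ IsMulCommutative P := by
  intro hP
  have := Fact.mk hℓ
  obtain ⟨ζ, hζ⟩ := exists_prime_orderOf_dvd_card' ℓ hdvd
  obtain ⟨H, hH, a, ha, b, hb, hab⟩ :=
    exists_isPGroup_commutatorElement_notMem_center hℓ2 hζ hle hι
  exact hab (hZ (commutatorElement_mem_of_isMulCommutative_sylow_quotient P hH ha hb))

/-- If `F` is a finite field with `q` elements, `ℓ ≥ 5` is a prime with `ℓ ∣ q - 1` and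
`ℓ ≤ n`, then for every central subgroup `Z` of `SLₙ(F)`, every Sylow `ℓ`-subgroup of the
quotient `SLₙ(F)/Z` is nonabelian. -/
theorem stmt_8 {F : Type*} [Field F] [Fintype F] {q n ℓ : ℕ}
    (hq : Fintype.card F = q) (hℓ : ℓ.Prime) (hℓ5 : 5 ≤ ℓ)
    (hdvd : ℓ ∣ q - 1) (hℓn : ℓ ≤ n)
    (Z : Subgroup (Matrix.SpecialLinearGroup (Fin n) F))
    (hZ : Z ≤ Subgroup.center (Matrix.SpecialLinearGroup (Fin n) F)) [Z.Normal] :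
    ∀ P : Sylow ℓ (Matrix.SpecialLinearGroup (Fin n) F ⧸ Z),
      ¬ ∀ a ∈ P, ∀ b ∈ P, a * b = b * a := by
  intro P hP
  have hunits : ℓ ∣ Nat.card Fˣ := by rwa [Nat.card_units, Nat.card_eq_fintype_card, hq]
  exact stmt_8_general hℓ (by lia) hunits (by simpa) (by rw [Fintype.card_fin]; lia) Z hZ P
    (.of_setLike_mul_comm hP)
end

section
/- Let p be a prime and G a finite group with a normal Sylow p-subgroup D such that every nontrivial normal subgroup of G has order divisible by p (i.e. O_{p'}(G) = 1). If G has exactly 4 conjugacy classes and exactly 3 conjugacy classes consisting of p-regular elements, then G is isomorphic to the alternating group A_4 (in particular p = 2 and D is a Klein four group C_2 × C_2). -/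
/-!
There is only one class of elements of order divisible by `p`, so it is `D \ {1}`. If a
`p`-regular `g` commutes with a nontrivial `d ∈ D`, then `p` divides the order of `g * d`, so
`g * d`, and hence `g`, lies in `D`: thus `D` contains the centralizers of its nontrivial elements.
It is abelian because its centre is a nontrivial normal subgroup of `G`, and orbit-stabilizer then
gives `|D| = |G : D| + 1`.
An element outside `D` is conjugate to its entire coset, so `G ⧸ D` has three conjugacy classes and
therefore order `3` or `6`. If it were `6`, then `D` would be cyclic of order `7` and `G ⧸ D`,
embedding in `Aut D`, would be abelian with six classes. So `|D| = 4` and `|G| = 12`, and `G` acts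
faithfully on the four cosets of a subgroup of order `3`.
-/

section ConjClasses

variable {G : Type*} [Group G]

theorem ncard_carrier_mk_eq_index_centralizer (g : G) :
    (ConjClasses.mk g).carrier.ncard = (Subgroup.centralizer {g}).index := by
  rw [← ConjAct.orbit_eq_carrier_conjClasses, ← MulAction.index_stabilizer,
    Subgroup.centralizer_eq_comap_stabilizer]
  exact (Subgroup.index_comap_of_surjective _ ConjAct.toConjAct.surjective).symm

theorem ncard_carrier_dvd_card (c : ConjClasses G) : c.carrier.ncard ∣ Nat.card G := by
  obtain ⟨g, rfl⟩ := c.exists_rep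
  rw [ncard_carrier_mk_eq_index_centralizer]
  exact Subgroup.index_dvd_card _

theorem ncard_carrier_one : (1 : ConjClasses G).carrier.ncard = 1 := by
  rw [ConjClasses.one_eq_mk_one, ncard_carrier_mk_eq_index_centralizer, Subgroup.index_eq_one]
  exact Subgroup.centralizer_eq_top_iff_subset.mpr (by simp)

theorem card_conjClasses_of_isMulCommutative [IsMulCommutative G] :
    Nat.card (ConjClasses G) = Nat.card G :=
  let _ : CommGroup G := IsMulCommutative.instCommGroup
  (Nat.card_congr ConjClasses.mkEquiv).symm

theorem orderOf_eq_of_isConj {x y : G} (h : IsConj x y) : orderOf x = orderOf y := by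
  obtain ⟨c, rfl⟩ := isConj_iff.mp h
  exact (MulEquiv.orderOf_eq (MulAut.conj c) x).symm

theorem forall_mem_carrier_mk_not_dvd_orderOf_iff {n : ℕ} {g : G} :
    (∀ x ∈ (ConjClasses.mk g).carrier, ¬ n ∣ orderOf x) ↔ ¬ n ∣ orderOf g := by
  refine ⟨fun h => h g ConjClasses.mem_carrier_mk, fun h x hx => ?_⟩
  rw [ConjClasses.mem_carrier_iff_mk_eq, ConjClasses.mk_eq_mk_iff_isConj] at hx
  rwa [orderOf_eq_of_isConj hx]

end ConjClasses

section ThreeClasses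

theorem add_add_one_eq_of_dvd {a b : ℕ} (ha : a ∣ a + b + 1) (hb : b ∣ a + b + 1) :
    a + b + 1 = 3 ∨ a + b + 1 = 4 ∨ a + b + 1 = 6 := by
  wlog hab : a ≤ b generalizing a b
  · rw [add_comm a b] at ha hb ⊢
    exact this hb ha (by omega)
  obtain ⟨k, hk⟩ : b ∣ a + 1 := (Nat.dvd_add_left dvd_rfl).mp (by convert hb using 1; ring)
  have hk0 : k ≠ 0 := by rintro rfl; omega
  obtain rfl | hk2 : k = 1 ∨ 2 ≤ k := by omega
  · obtain rfl : b = a + 1 := by omega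
    have ha2 : a ∣ 2 := (Nat.dvd_add_left ⟨2, rfl⟩).mp (by convert ha using 1; ring)
    rcases (Nat.dvd_prime Nat.prime_two).mp ha2 with rfl | rfl <;> omega
  · have : b * 2 ≤ b * k := Nat.mul_le_mul_left b hk2
    have : a ≠ 0 := by rintro rfl; simp at ha
    omega

theorem exists_ncard_add_ncard_add_one_eq_card {Q : Type*} [Group Q] [Finite Q]
    (h : Nat.card (ConjClasses Q) = 3) :
    ∃ A B : ConjClasses Q, A.carrier.ncard + B.carrier.ncard + 1 = Nat.card Q := by
  classical
  have := Fintype.ofFinite (ConjClasses Q)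
  have hcard : (Finset.univ.erase (1 : ConjClasses Q)).card = 2 := by
    rw [Finset.card_erase_of_mem (Finset.mem_univ _), Finset.card_univ, ← Nat.card_eq_fintype_card,
      h]
  obtain ⟨A, B, hAB, hnontrivial⟩ := Finset.card_eq_two.mp hcard
  refine ⟨A, B, ?_⟩
  rw [← Group.sum_card_conj_classes_eq_card, finsum_eq_sum_of_fintype,
    ← Finset.sum_erase_add _ _ (Finset.mem_univ (1 : ConjClasses Q)), hnontrivial,
    Finset.sum_pair hAB, ncard_carrier_one]

theorem card_eq_three_or_six_of_card_conjClasses_eq_three {Q : Type*} [Group Q] [Finite Q]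
    (h : Nat.card (ConjClasses Q) = 3) : Nat.card Q = 3 ∨ Nat.card Q = 6 := by
  obtain ⟨A, B, hAB⟩ := exists_ncard_add_ncard_add_one_eq_card h
  have h346 := add_add_one_eq_of_dvd (hAB ▸ ncard_carrier_dvd_card A)
    (hAB ▸ ncard_carrier_dvd_card B)
  rw [hAB] at h346
  rcases h346 with h3 | h4 | h6
  · exact .inl h3
  · have : IsMulCommutative Q :=
      IsPGroup.isMulCommutative_of_card_eq_prime_sq (p := 2) (by rw [h4]; rfl)
    rw [card_conjClasses_of_isMulCommutative] at h
    omega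
  · exact .inr h6

end ThreeClasses

section AlternatingGroup

variable {G : Type*} [Group G]

theorem toPermHom_quotient_injective {H : Subgroup G} (hH : H.normalCore = ⊥) :
    Function.Injective (MulAction.toPermHom G (G ⧸ H)) := by
  rw [← MonoidHom.ker_eq_bot_iff, ← Subgroup.normalCore_eq_ker, hH]

theorem nonempty_mulEquiv_alternatingGroup_of_injective {α : Type*} [Fintype α] [DecidableEq α]
    {f : G →* Equiv.Perm α} (hf : Function.Injective f)
    (hcard : 2 * Nat.card G = Nat.card (Equiv.Perm α)) :
    Nonempty (G ≃* alternatingGroup α) := by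
  let e : G ≃* f.range := MonoidHom.ofInjective hf
  have hindex : f.range.index = 2 := by
    have hmul := f.range.card_mul_index
    rw [← Nat.card_congr e.toEquiv, ← hcard, mul_comm] at hmul
    exact Nat.eq_of_mul_eq_mul_right (by have := Nat.card_pos (α := Equiv.Perm α); omega) hmul
  exact ⟨e.trans (MulEquiv.subgroupCongr (Equiv.Perm.eq_alternatingGroup_of_index_eq_two hindex))⟩

theorem nonempty_mulEquiv_alternatingGroup_of_card_eq_twelve (hG : Nat.card G = 12)
    (hnormal : ∀ N : Subgroup G, N.Normal → Nat.card N ≠ 3) :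
    Nonempty (G ≃* alternatingGroup (Fin 4)) := by
  have : Finite G := Nat.finite_of_card_ne_zero (by omega)
  obtain ⟨g, hg⟩ := exists_prime_orderOf_dvd_card' (G := G) 3 (by rw [hG]; norm_num)
  let H := Subgroup.zpowers g
  have hH : Nat.card H = 3 := by rw [Nat.card_zpowers, hg]
  have hcore : H.normalCore = ⊥ := by
    have hdvd : Nat.card H.normalCore ∣ 3 := hH ▸ Subgroup.card_dvd_of_le H.normalCore_le
    rcases (Nat.dvd_prime Nat.prime_three).mp hdvd with h1 | h3
    · exact Subgroup.card_eq_one.mp h1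
    · exact absurd h3 (hnormal _ inferInstance)
  have hcosets : Nat.card (G ⧸ H) = 4 := by
    have := H.card_eq_card_quotient_mul_card_subgroup
    rw [hG, hH] at this
    omega
  let e : Equiv.Perm (G ⧸ H) ≃* Equiv.Perm (Fin 4) :=
    (Finite.equivFinOfCardEq hcosets).permCongrHom
  refine nonempty_mulEquiv_alternatingGroup_of_injective
    (f := e.toMonoidHom.comp (MulAction.toPermHom G (G ⧸ H)))
    (e.injective.comp (toPermHom_quotient_injective hcore)) ?_
  rw [hG, Nat.card_perm, Nat.card_fin]
  rfl

end AlternatingGroup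

theorem commutator_le_centralizer_of_isCyclic {G : Type*} [Group G] (D : Subgroup G) [D.Normal]
    [IsCyclic D] : commutator G ≤ Subgroup.centralizer (D : Set G) := by
  intro g hg
  let e := IsCyclic.mulAutMulEquiv D
  have he : e (MulAut.conjNormal g) = 1 :=
    Abelianization.commutator_subset_ker (e.toMonoidHom.comp MulAut.conjNormal) hg
  have hker : MulAut.conjNormal g = (1 : MulAut D) := (map_eq_one_iff e e.injective).mp he
  rw [Subgroup.mem_centralizer_iff]
  intro d hd
  have hconj := congrArg Subtype.val (DFunLike.congr_fun hker ⟨d, hd⟩)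
  rw [MulAut.conjNormal_apply] at hconj
  exact (mul_inv_eq_iff_eq_mul.mp hconj).symm

section Frobenius

variable {G : Type*} [Group G] {D : Subgroup G}

/-- `D` contains the centralizer in `G` of each of its nontrivial elements; for a proper nontrivial
normal subgroup of a finite group this says that `D` is a Frobenius kernel. -/
def ContainsCentralizers (D : Subgroup G) : Prop :=
  ∀ d ∈ D, d ≠ 1 → Subgroup.centralizer {d} ≤ D

/-- The nontrivial elements of `D` are all conjugate to each other in `G` (not necessarily
in `D`). -/
def NontrivialElementsConj (D : Subgroup G) : Prop :=
  ∀ x ∈ D, x ≠ 1 → ∀ y ∈ D, y ≠ 1 → IsConj x y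

theorem ContainsCentralizers.fixedPointFree_conjNormal [D.Normal] (hcent : ContainsCentralizers D)
    {u : G} (hu : u ∉ D) : MonoidHom.FixedPointFree (MulAut.conjNormal u : MulAut D) := by
  intro d hd
  by_contra hd1
  refine hu (hcent d d.2 (by simpa using hd1) ?_)
  rw [Subgroup.mem_centralizer_singleton_iff, ← mul_inv_eq_iff_eq_mul,
    ← MulAut.conjNormal_apply, hd]

theorem ContainsCentralizers.isConj_mul_left [D.Normal] [Finite D] (hcent : ContainsCentralizers D)
    {d u : G} (hd : d ∈ D) (hu : u ∉ D) : IsConj u (d * u) := by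
  obtain ⟨y, hy⟩ := (hcent.fixedPointFree_conjNormal hu).commutatorMap_surjective ⟨d, hd⟩
  have hcomm : (y : G) * (u * y * u⁻¹)⁻¹ = d := by
    simpa [div_eq_mul_inv] using congrArg Subtype.val hy
  exact isConj_iff.mpr ⟨y, by rw [← hcomm]; group⟩

theorem ContainsCentralizers.isConj_iff_isConj_mk [D.Normal] [Finite D]
    (hcent : ContainsCentralizers D) {u v : G} (hu : u ∉ D) :
    IsConj u v ↔ IsConj (u : G ⧸ D) (v : G ⧸ D) := by
  refine ⟨(QuotientGroup.mk' D).map_isConj, fun h => ?_⟩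
  obtain ⟨x, hx⟩ := isConj_iff.mp h
  obtain ⟨x, rfl⟩ := QuotientGroup.mk_surjective x
  have hxu : IsConj u (x * u * x⁻¹) := isConj_iff.mpr ⟨x, rfl⟩
  have hxuD : x * u * x⁻¹ ∉ D := mt (‹D.Normal›.mem_comm_iff.mp) (by simpa using hu)
  have hd : v * (x * u * x⁻¹)⁻¹ ∈ D := by
    rw [← QuotientGroup.eq_one_iff, QuotientGroup.mk_mul, ← hx]
    simp
  have hv := hcent.isConj_mul_left hd hxuD
  rw [inv_mul_cancel_right] at hv
  exact hxu.trans hv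

theorem NontrivialElementsConj.eq_of_le (hconj : NontrivialElementsConj D) {N : Subgroup G}
    [N.Normal] (hN : N ≠ ⊥) (hND : N ≤ D) : N = D := by
  refine le_antisymm hND fun y hy => ?_
  obtain ⟨⟨x, hx⟩, hx1⟩ := Subgroup.ne_bot_iff_exists_ne_one.mp hN
  by_cases hy1 : y = 1
  · exact hy1 ▸ N.one_mem
  · obtain ⟨c, rfl⟩ := isConj_iff.mp (hconj x (hND hx) (by simpa using hx1) y hy hy1)
    exact ‹N.Normal›.conj_mem x hx c

theorem NontrivialElementsConj.isMulCommutative [D.Normal] [Finite D] {p : ℕ} [Fact p.Prime]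
    (hconj : NontrivialElementsConj D) (hD : IsPGroup p D) : IsMulCommutative D := by
  rcases subsingleton_or_nontrivial D with hsub | hnontriv
  · exact ⟨⟨fun x y => Subsingleton.elim _ _⟩⟩
  have hcenter : (Subgroup.center D).map D.subtype ≠ ⊥ := by
    rw [Ne, Subgroup.map_eq_bot_iff_of_injective _ D.subtype_injective]
    exact (Subgroup.nontrivial_iff_ne_bot _).mp hD.center_nontrivial
  have heq := hconj.eq_of_le hcenter (Subgroup.map_subtype_le _)
  rw [← Subgroup.center_eq_top_iff]
  refine Subgroup.map_injective D.subtype_injective ?_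
  rw [heq, ← MonoidHom.range_eq_map, Subgroup.range_subtype]

theorem ContainsCentralizers.centralizer_singleton [IsMulCommutative D]
    (hcent : ContainsCentralizers D) {d : G} (hd : d ∈ D) (hd1 : d ≠ 1) :
    Subgroup.centralizer {d} = D :=
  le_antisymm (hcent d hd hd1) <| (Subgroup.le_centralizer D).trans <|
    Subgroup.centralizer_le (by simpa using hd)

theorem NontrivialElementsConj.carrier_mk [D.Normal] (hconj : NontrivialElementsConj D) {d : G}
    (hd : d ∈ D) (hd1 : d ≠ 1) : (ConjClasses.mk d).carrier = (D : Set G) \ {1} := by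
  ext x
  rw [ConjClasses.mem_carrier_iff_mk_eq, ConjClasses.mk_eq_mk_iff_isConj, isConj_comm]
  refine ⟨fun h => ?_, fun ⟨hx, hx1⟩ => hconj d hd hd1 x hx hx1⟩
  obtain ⟨c, rfl⟩ := isConj_iff.mp h
  exact ⟨‹D.Normal›.conj_mem d hd c, by simpa using hd1⟩

theorem ContainsCentralizers.card_eq_index_add_one [Finite D] [D.Normal] [IsMulCommutative D]
    (hcent : ContainsCentralizers D) (hconj : NontrivialElementsConj D) (hD : D ≠ ⊥) :
    Nat.card D = D.index + 1 := by
  obtain ⟨⟨d, hd⟩, hd1⟩ := Subgroup.ne_bot_iff_exists_ne_one.mp hD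
  have hd1 : d ≠ 1 := by simpa using hd1
  rw [← hcent.centralizer_singleton hd hd1, ← ncard_carrier_mk_eq_index_centralizer,
    hconj.carrier_mk hd hd1, hcent.centralizer_singleton hd hd1]
  exact (Set.ncard_sdiff_singleton_add_one D.one_mem (Set.toFinite (D : Set G))).symm

theorem ContainsCentralizers.bijective_map_mk' [Finite D] [D.Normal]
    (hcent : ContainsCentralizers D) (hconj : NontrivialElementsConj D) {d : G}
    (hd : d ∈ D) (hd1 : d ≠ 1) :
    Function.Bijective fun c : {c : ConjClasses G // c ≠ ConjClasses.mk d} =>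
      ConjClasses.map (QuotientGroup.mk' D) c := by
  have eq_one_of_mem : ∀ u ∈ D, ConjClasses.mk u ≠ ConjClasses.mk d → u = 1 := fun u hu hne => by
    by_contra hu1
    exact hne (ConjClasses.mk_eq_mk_iff_isConj.mpr (hconj u hu hu1 d hd hd1))
  constructor
  · rintro ⟨c, hc⟩ ⟨c', hc'⟩ h
    obtain ⟨u, rfl⟩ := c.exists_rep
    obtain ⟨v, rfl⟩ := c'.exists_rep
    have huv : IsConj (u : G ⧸ D) (v : G ⧸ D) := ConjClasses.mk_eq_mk_iff_isConj.mp h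
    refine Subtype.ext (ConjClasses.mk_eq_mk_iff_isConj.mpr ?_)
    by_cases hu : u ∈ D
    · rw [(QuotientGroup.eq_one_iff u).mpr hu, isConj_one_right, QuotientGroup.eq_one_iff] at huv
      rw [eq_one_of_mem u hu hc, eq_one_of_mem v huv hc']
    · exact (hcent.isConj_iff_isConj_mk hu).mpr huv
  · intro c
    obtain ⟨u, rfl⟩ := c.exists_rep
    obtain ⟨u, rfl⟩ := QuotientGroup.mk_surjective u
    by_cases hu : u ∈ D
    · refine ⟨⟨ConjClasses.mk 1, fun h => hd1 ?_⟩, ?_⟩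
      · exact isConj_one_right.mp (ConjClasses.mk_eq_mk_iff_isConj.mp h)
      · rw [(QuotientGroup.eq_one_iff u).mpr hu]
        rfl
    · refine ⟨⟨ConjClasses.mk u, fun h => hu ?_⟩, rfl⟩
      obtain ⟨x, rfl⟩ := isConj_iff.mp (ConjClasses.mk_eq_mk_iff_isConj.mp h).symm
      exact ‹D.Normal›.conj_mem d hd x

theorem ContainsCentralizers.card_conjClasses_eq_quotient_add_one [Finite G] [D.Normal]
    (hcent : ContainsCentralizers D) (hconj : NontrivialElementsConj D) (hD : D ≠ ⊥) :
    Nat.card (ConjClasses G) = Nat.card (ConjClasses (G ⧸ D)) + 1 := by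
  classical
  obtain ⟨⟨d, hd⟩, hd1⟩ := Subgroup.ne_bot_iff_exists_ne_one.mp hD
  have hbij := hcent.bijective_map_mk' hconj hd (by simpa using hd1)
  rw [← Nat.card_eq_of_bijective _ hbij, ← Finite.card_option]
  exact Nat.card_congr (Equiv.optionSubtypeNe (ConjClasses.mk d)).symm

theorem ContainsCentralizers.index_eq_three_of_card_conjClasses [Finite G] [D.Normal]
    [IsMulCommutative D] (hcent : ContainsCentralizers D) (hconj : NontrivialElementsConj D)
    (hD : D ≠ ⊥) (hk : Nat.card (ConjClasses G) = 4) : D.index = 3 := by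
  have hquot : Nat.card (ConjClasses (G ⧸ D)) = 3 := by
    have := hcent.card_conjClasses_eq_quotient_add_one hconj hD
    omega
  refine (card_eq_three_or_six_of_card_conjClasses_eq_three hquot).resolve_right fun h6 => ?_
  have : Fact (Nat.Prime 7) := ⟨by norm_num⟩
  have : IsCyclic D := isCyclic_of_prime_card (p := 7) <| by
    rw [hcent.card_eq_index_add_one hconj hD, Subgroup.index_eq_card, h6]
  obtain ⟨⟨d, hd⟩, hd1⟩ := Subgroup.ne_bot_iff_exists_ne_one.mp hD
  have hcomm : commutator G ≤ D :=
    (commutator_le_centralizer_of_isCyclic D).trans <|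
      (Subgroup.centralizer_le (by simpa using hd)).trans (hcent d hd (by simpa using hd1))
  have := Subgroup.Normal.quotient_commutative_iff_commutator_le.mpr hcomm
  rw [card_conjClasses_of_isMulCommutative] at hquot
  omega

end Frobenius

section Singular

/-- `G` has at most one conjugacy class of elements whose order is divisible by `p`. -/
def SingularElementsConj (p : ℕ) (G : Type*) [Group G] : Prop :=
  ∀ x y : G, p ∣ orderOf x → p ∣ orderOf y → IsConj x y

variable {p : ℕ} {G : Type*} [Group G] {D : Subgroup G}

theorem singularElementsConj_of_card [Finite G]
    (h : Nat.card (ConjClasses G) =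
      Nat.card {c : ConjClasses G // ∀ g ∈ c.carrier, ¬ p ∣ orderOf g} + 1) :
    SingularElementsConj p G := by
  let regular : Set (ConjClasses G) := {c | ∀ g ∈ c.carrier, ¬ p ∣ orderOf g}
  have hcompl : regularᶜ.ncard ≤ 1 := by
    have hadd := Set.ncard_add_ncard_compl regular
    have hregular : Nat.card (ConjClasses G) = regular.ncard + 1 := h
    omega
  intro x y hx hy
  have hmem : ∀ g : G, p ∣ orderOf g → ConjClasses.mk g ∈ regularᶜ := fun g hg hreg =>
    forall_mem_carrier_mk_not_dvd_orderOf_iff.mp hreg hg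
  exact ConjClasses.mk_eq_mk_iff_isConj.mp
    ((Set.ncard_le_one (Set.toFinite _)).mp hcompl _ (hmem x hx) _ (hmem y hy))

theorem dvd_orderOf_of_mem_of_isPGroup [Fact p.Prime] (hD : IsPGroup p D) {x : G} (hx : x ∈ D)
    (hx1 : x ≠ 1) : p ∣ orderOf x := by
  simpa using hD.dvd_orderOf (g := ⟨x, hx⟩) (by simpa using hx1)

theorem SingularElementsConj.nontrivialElementsConj [Fact p.Prime]
    (hsing : SingularElementsConj p G) (hD : IsPGroup p D) : NontrivialElementsConj D :=
  fun x hx hx1 y hy hy1 => hsing x y (dvd_orderOf_of_mem_of_isPGroup hD hx hx1)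
    (dvd_orderOf_of_mem_of_isPGroup hD hy hy1)

theorem SingularElementsConj.mem_of_dvd_orderOf [Fact p.Prime] [D.Normal]
    (hsing : SingularElementsConj p G) (hD : IsPGroup p D) (hbot : D ≠ ⊥) {x : G}
    (hx : p ∣ orderOf x) : x ∈ D := by
  obtain ⟨⟨d, hd⟩, hd1⟩ := Subgroup.ne_bot_iff_exists_ne_one.mp hbot
  have hdp : p ∣ orderOf d := dvd_orderOf_of_mem_of_isPGroup hD hd (by simpa using hd1)
  obtain ⟨c, rfl⟩ := isConj_iff.mp (hsing d x hdp hx)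
  exact ‹D.Normal›.conj_mem d hd c

theorem SingularElementsConj.containsCentralizers [Fact p.Prime] [D.Normal]
    (hsing : SingularElementsConj p G) (hD : IsPGroup p D) : ContainsCentralizers D := by
  intro d hd hd1 g hg
  have hbot : D ≠ ⊥ := by rintro rfl; exact hd1 hd
  by_cases hgp : p ∣ orderOf g
  · exact hsing.mem_of_dvd_orderOf hD hbot hgp
  have hdp : p ∣ orderOf d := dvd_orderOf_of_mem_of_isPGroup hD hd hd1
  have hcop : (orderOf g).Coprime (orderOf d) := by
    have := hD.orderOf_coprime ((Fact.out : p.Prime).coprime_iff_not_dvd.mpr hgp) ⟨d, hd⟩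
    simpa using this.symm
  have horder : orderOf (g * d) = orderOf g * orderOf d :=
    Commute.orderOf_mul_eq_mul_orderOf_of_coprime
      (Subgroup.mem_centralizer_singleton_iff.mp hg) hcop
  have hgd : g * d ∈ D := hsing.mem_of_dvd_orderOf hD hbot (horder ▸ hdp.mul_left _)
  exact (D.mul_mem_cancel_right hd).mp hgd

end Singular

/-- If a finite group `G` has a normal Sylow `p`-subgroup, `O_{p'}(G) = 1`, exactly `4`
conjugacy classes and exactly `3` conjugacy classes of `p`-regular elements, then
`p = 2` and `G` is isomorphic to the alternating group `A₄` (so the Sylow `p`-subgroup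
is a Klein four group). -/
theorem stmt_10 {p : ℕ} (hp : p.Prime) {G : Type*} [Group G] [Fintype G]
    (D : Subgroup G)
    (hDn : D.Normal)
    (hDpgrp : IsPGroup p D)
    (hDsyl : ¬ p ∣ D.index)
    (hOp' : ∀ N : Subgroup G, N.Normal → N ≠ ⊥ → p ∣ Nat.card N)
    (hk : Nat.card (ConjClasses G) = 4)
    (hl : Nat.card {c : ConjClasses G // ∀ g ∈ c.carrier, ¬ p ∣ orderOf g} = 3) :
    p = 2 ∧ Nonempty (G ≃* alternatingGroup (Fin 4)) := by
  have : Fact p.Prime := ⟨hp⟩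
  have hD : D ≠ ⊥ := by
    rintro rfl
    have : Nontrivial (ConjClasses G) := Finite.one_lt_card_iff_nontrivial.mp (by omega)
    have : Nontrivial G := ConjClasses.mk_surjective.nontrivial
    exact hDsyl (by simpa using hOp' ⊤ inferInstance top_ne_bot)
  have hsing : SingularElementsConj p G := singularElementsConj_of_card (by rw [hk, hl])
  have hconj : NontrivialElementsConj D := hsing.nontrivialElementsConj hDpgrp
  have hcent : ContainsCentralizers D := hsing.containsCentralizers hDpgrp
  have : IsMulCommutative D := hconj.isMulCommutative hDpgrp
  have hindex : D.index = 3 := hcent.index_eq_three_of_card_conjClasses hconj hD hk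
  have hcardD : Nat.card D = 4 := by rw [hcent.card_eq_index_add_one hconj hD, hindex]
  have hp2 : p = 2 := by
    have hpD : p ∣ 2 ^ 2 := (hOp' D hDn hD).trans (dvd_of_eq hcardD)
    exact (Nat.prime_dvd_prime_iff_eq hp Nat.prime_two).mp (hp.dvd_of_dvd_pow hpD)
  subst hp2
  have hcardG : Nat.card G = 12 := by rw [← D.card_mul_index, hcardD, hindex]
  refine ⟨rfl, nonempty_mulEquiv_alternatingGroup_of_card_eq_twelve hcardG fun N hN hN3 => ?_⟩
  have := hOp' N hN (by rintro rfl; simp at hN3)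
  omega
end

section
/- Let p be a prime, let D be a nontrivial finite abelian group whose order is a power of p, and let E be a finite group of order coprime to p acting on D by group automorphisms. If the action of E on D has exactly 3 orbits, then D is elementary abelian, i.e. every element of D has order dividing p. -/
/-!
An `E`-invariant subgroup `H` of `D` with `⊥ < H < ⊤` separates the orbit of `1`, the other orbits
inside `H` and the orbits outside `H`. If there are at most three orbits, the complement of `H` is
therefore a single orbit, so its size divides `|E|` and is prime to `p`. But it is also a union of
cosets of the nontrivial `p`-group `H`, hence divisible by `p`. So `D` has no such subgroup.
In particular `D` is characteristically simple: its center is everything, and then so is the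
kernel of the `p`-th power map.
-/

open MulAction

theorem natCard_dvd_ncard_compl {G : Type*} [Group G] [Finite G] (H : Subgroup G) :
    Nat.card H ∣ ((H : Set G)ᶜ).ncard := by
  have card_add : Nat.card H + ((H : Set G)ᶜ).ncard = Nat.card G :=
    Set.ncard_add_ncard_compl (H : Set G)
  exact (Nat.dvd_add_right dvd_rfl).mp (card_add ▸ H.card_subgroup_dvd_card)

theorem ncard_orbit_dvd_natCard (E : Type*) {X : Type*} [Group E] [MulAction E X] (x : X) :
    (orbit E x).ncard ∣ Nat.card E :=
  index_stabilizer E x ▸ (stabilizer E x).index_dvd_card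

theorem finite_of_finite_range_orbit {E X : Type*} [Monoid E] [MulAction E X] [Finite E]
    (orbits_finite : (Set.range (orbit E : X → Set X)).Finite) : Finite X := by
  have sUnion_finite : (⋃₀ Set.range (orbit E : X → Set X)).Finite :=
    orbits_finite.sUnion (Set.forall_mem_range.mpr fun x => Set.finite_range (· • x))
  exact Set.finite_univ_iff.mp
    (sUnion_finite.subset fun x _ => ⟨orbit E x, ⟨x, rfl⟩, mem_orbit_self x⟩)

theorem mem_iff_mem_of_orbit_eq {E X : Type*} [Group E] [MulAction E X] {s : Set X}
    (hs : ∀ e : E, ∀ x ∈ s, e • x ∈ s) {x y : X} (h : orbit E x = orbit E y) :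
    x ∈ s ↔ y ∈ s := by
  have mem_of_orbit_eq {a b : X} (hab : orbit E a = orbit E b) (hb : b ∈ s) : a ∈ s := by
    obtain ⟨e, rfl⟩ := orbit_eq_iff.mp hab
    exact hs e b hb
  exact ⟨mem_of_orbit_eq h.symm, mem_of_orbit_eq h⟩

section CharacteristicallySimple

/-- A group without proper nontrivial characteristic subgroups. Unlike the usual convention for
characteristically simple groups, the trivial group is allowed. -/
def IsCharacteristicallySimple (G : Type*) [Group G] : Prop :=
  ∀ H : Subgroup G, H.Characteristic → H = ⊥ ∨ H = ⊤

theorem IsCharacteristicallySimple.center_eq_top {G : Type*} [Group G] [Finite G] {p : ℕ}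
    [Fact p.Prime] (simple : IsCharacteristicallySimple G) (hG : IsPGroup p G) :
    Subgroup.center G = ⊤ := by
  rcases subsingleton_or_nontrivial G with _ | _
  · exact Subsingleton.elim _ _
  · exact (simple _ inferInstance).resolve_left hG.bot_lt_center.ne'

theorem characteristic_ker_powMonoidHom (G : Type*) [CommGroup G] (n : ℕ) :
    (powMonoidHom n : G →* G).ker.Characteristic :=
  Subgroup.characteristic_iff_le_comap.mpr fun f g (hg : g ^ n = 1) =>
    show f g ^ n = 1 by rw [← map_pow, hg, map_one]

theorem subsingleton_of_ker_powMonoidHom_eq_bot {G : Type*} [CommGroup G] {p : ℕ}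
    (hG : IsPGroup p G) (ker_eq_bot : (powMonoidHom p : G →* G).ker = ⊥) : Subsingleton G := by
  have pow_injective : Function.Injective (fun g : G => g ^ p) :=
    (MonoidHom.ker_eq_bot_iff (powMonoidHom p : G →* G)).mp ker_eq_bot
  refine subsingleton_of_forall_eq 1 fun g => ?_
  obtain ⟨k, hk⟩ := hG g
  apply pow_injective.iterate k
  simpa only [pow_iterate, one_pow] using hk

theorem IsCharacteristicallySimple.pow_eq_one {G : Type*} [CommGroup G] {p : ℕ}
    (simple : IsCharacteristicallySimple G) (hG : IsPGroup p G) (g : G) : g ^ p = 1 := by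
  rcases simple _ (characteristic_ker_powMonoidHom G p) with ker_eq_bot | ker_eq_top
  · have := subsingleton_of_ker_powMonoidHom_eq_bot hG ker_eq_bot
    exact Subsingleton.elim _ _
  · exact MonoidHom.mem_ker.mp (ker_eq_top ▸ Subgroup.mem_top g)

end CharacteristicallySimple

section MulDistribMulAction

variable {D E : Type*} [Group D] [Group E] [MulDistribMulAction E D] {H : Subgroup D}

theorem smul_mem_of_characteristic [H.Characteristic] (e : E) {d : D} (hd : d ∈ H) :
    e • d ∈ H :=
  Subgroup.characteristic_iff_map_le.mp ‹_› (MulDistribMulAction.toMulAut E D e)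
    (Subgroup.mem_map_of_mem _ hd)

theorem eq_one_of_orbit_eq_orbit_one {x : D} (h : orbit E x = orbit E 1) : x = 1 := by
  obtain ⟨e, rfl⟩ := orbit_eq_iff.mp h
  exact smul_one e

theorem orbit_eq_compl_of_encard_range_orbit_le_three
    (horb : (Set.range (orbit E : D → Set D)).encard ≤ 3)
    (hH : ∀ e : E, ∀ d ∈ H, e • d ∈ H) (H_ne_bot : H ≠ ⊥) {x : D} (hx : x ∉ H) :
    orbit E x = (H : Set D)ᶜ := by
  obtain ⟨y, hy, y_ne_one⟩ := H.bot_or_exists_ne_one.resolve_left H_ne_bot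
  have orbit_ne {a b : D} (ha : a ∈ H) (hb : b ∉ H) : orbit E a ≠ orbit E b :=
    fun h => hb ((mem_iff_mem_of_orbit_eq (s := H) hH h).mp ha)
  refine Set.Subset.antisymm (fun z hz hzH => orbit_ne hzH hx (orbit_eq_iff.mpr hz)) ?_
  intro z hz
  by_contra z_notMem
  have four_orbits : ({orbit E 1, orbit E y, orbit E x, orbit E z} : Set (Set D)).encard = 4 :=
    Set.encard_eq_four.mpr ⟨_, _, _, _,
      fun h => y_ne_one (eq_one_of_orbit_eq_orbit_one h.symm),
      orbit_ne H.one_mem hx, orbit_ne H.one_mem hz, orbit_ne hy hx, orbit_ne hy hz,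
      fun h => z_notMem (orbit_eq_iff.mp h.symm), rfl⟩
  have four_le_three : (4 : ℕ∞) ≤ 3 := calc
    4 = ({orbit E 1, orbit E y, orbit E x, orbit E z} : Set (Set D)).encard := four_orbits.symm
    _ ≤ (Set.range (orbit E : D → Set D)).encard :=
      Set.encard_le_encard (by rintro _ (rfl | rfl | rfl | rfl) <;> exact ⟨_, rfl⟩)
    _ ≤ 3 := horb
  exact absurd four_le_three (by decide)

theorem eq_bot_or_eq_top_of_encard_range_orbit_le_three [Finite D] {p : ℕ} [Fact p.Prime]
    (hD : IsPGroup p D) (hE : (Nat.card E).Coprime p)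
    (horb : (Set.range (orbit E : D → Set D)).encard ≤ 3)
    (hH : ∀ e : E, ∀ d ∈ H, e • d ∈ H) : H = ⊥ ∨ H = ⊤ := by
  by_contra! ⟨H_ne_bot, H_ne_top⟩
  obtain ⟨x, hx⟩ := SetLike.exists_not_mem_of_ne_top H H_ne_top
  have p_dvd_card_E : p ∣ Nat.card E := calc
    p ∣ Nat.card H := (hD.to_subgroup H).card_eq_or_dvd.resolve_left
      (mt H.eq_bot_of_card_eq H_ne_bot)
    _ ∣ ((H : Set D)ᶜ).ncard := natCard_dvd_ncard_compl H
    _ = (orbit E x).ncard := by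
      rw [orbit_eq_compl_of_encard_range_orbit_le_three horb hH H_ne_bot hx]
    _ ∣ Nat.card E := ncard_orbit_dvd_natCard E x
  exact (Fact.out : p.Prime).coprime_iff_not_dvd.mp hE.symm p_dvd_card_E

theorem isCharacteristicallySimple_of_encard_range_orbit_le_three [Finite D] {p : ℕ}
    [Fact p.Prime] (hD : IsPGroup p D) (hE : (Nat.card E).Coprime p)
    (horb : (Set.range (orbit E : D → Set D)).encard ≤ 3) : IsCharacteristicallySimple D :=
  fun _ _ => eq_bot_or_eq_top_of_encard_range_orbit_le_three hD hE horb
    fun e _ hd => smul_mem_of_characteristic e hd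

end MulDistribMulAction

theorem stmt_12_general {p : ℕ} (hp : p.Prime) {D : Type*} [Group D] (hD : IsPGroup p D)
    {E : Type*} [Group E] (hE : (Nat.card E).Coprime p) (φ : E →* MulAut D)
    (horb : {s : Set D | ∃ d : D, s = Set.range fun e : E => φ e d}.encard ≤ 3) :
    (∀ a b : D, a * b = b * a) ∧ ∀ d : D, d ^ p = 1 := by
  have : Fact p.Prime := ⟨hp⟩
  let : MulDistribMulAction E D := MulDistribMulAction.compHom D φ
  have orbits_le_three : (Set.range (orbit E : D → Set D)).encard ≤ 3 := by
    convert horb using 2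
    exact Set.ext fun _ => exists_congr fun _ => eq_comm
  have : Finite E := Nat.finite_of_card_ne_zero fun h => hp.ne_one (by simpa [h] using hE)
  have : Finite D := finite_of_finite_range_orbit (Set.finite_of_encard_le_coe orbits_le_three)
  have simple : IsCharacteristicallySimple D :=
    isCharacteristicallySimple_of_encard_range_orbit_le_three hD hE orbits_le_three
  let : CommGroup D := Group.commGroupOfCenterEqTop (simple.center_eq_top hD)
  exact ⟨mul_comm, simple.pow_eq_one hD⟩

/-- If a finite group `E` of order coprime to the prime `p` acts by automorphisms on a
nontrivial finite abelian `p`-group `D` with exactly `3` orbits, then `D` is elementary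
abelian. -/
theorem stmt_12 {p : ℕ} (hp : p.Prime) {D : Type*} [CommGroup D] [Finite D] [Nontrivial D]
    (hDpgrp : IsPGroup p D)
    {E : Type*} [Group E] [Finite E] (hEp' : Nat.Coprime (Nat.card E) p)
    (φ : E →* MulAut D)
    (horb : Nat.card {s : Set D | ∃ d : D, s = Set.range fun e : E => φ e d} = 3) :
    ∀ d : D, d ^ p = 1 :=
  (stmt_12_general hp hDpgrp hEp' φ
    (Set.encard_le_coe_iff_finite_ncard_le.mpr ⟨Set.toFinite _, horb.le⟩)).2
end
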